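/- arXiv:1401.3088 — 2 statements merged into one kernel-verified Lean document; each statement's English description precedes it below -/
import Mathlib

section
/- Let K ≥ 1 and let M, C_1, …, C_K, Z_1, …, Z_K be finite discrete random variables, and write C = (C_1, …, C_K). Suppose that for each k ∈ {1, …, K}, the triple (Z_1, …, Z_{k−1}, C) → (C_k, M) → Z_k forms a Markov chain (i.e., Z_k is conditionally independent of (Z_1, …, Z_{k−1}, C) given (C_k, M)). Then the total information leakage satisfies I(M; Z_1, …, Z_K | C) ≤ Σ_{k=1}^K I(M; Z_k | C_k). -/
open scoped Classical

/-- Probability of an event under pmf `p` on a finite sample space. -/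
noncomputable def pr {Ω : Type*} [Fintype Ω] (p : Ω → ℝ) (E : Ω → Prop) : ℝ :=
  ∑ ω, if E ω then p ω else 0

/-- Shannon entropy of a finite discrete random variable `X`. -/
noncomputable def entropy {Ω α : Type*} [Fintype Ω] [Fintype α] (p : Ω → ℝ) (X : Ω → α) : ℝ :=
  -∑ x, pr p (fun ω => X ω = x) * Real.log (pr p (fun ω => X ω = x))

/-- Conditional entropy `H(X|Y) = H(X,Y) - H(Y)`. -/
noncomputable def condEntropy {Ω α β : Type*} [Fintype Ω] [Fintype α] [Fintype β]
    (p : Ω → ℝ) (X : Ω → α) (Y : Ω → β) : ℝ :=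
  entropy p (fun ω => (X ω, Y ω)) - entropy p Y

/-- Mutual information `I(X;Y) = H(X) + H(Y) - H(X,Y)`. -/
noncomputable def mutualInfo {Ω α β : Type*} [Fintype Ω] [Fintype α] [Fintype β]
    (p : Ω → ℝ) (X : Ω → α) (Y : Ω → β) : ℝ :=
  entropy p X + entropy p Y - entropy p (fun ω => (X ω, Y ω))

/-- Conditional mutual information `I(X;Y|Z) = H(X,Z) + H(Y,Z) - H(X,Y,Z) - H(Z)`. -/
noncomputable def condMutualInfo {Ω α β γ : Type*} [Fintype Ω] [Fintype α] [Fintype β] [Fintype γ]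
    (p : Ω → ℝ) (X : Ω → α) (Y : Ω → β) (Z : Ω → γ) : ℝ :=
  entropy p (fun ω => (X ω, Z ω)) + entropy p (fun ω => (Y ω, Z ω))
    - entropy p (fun ω => (X ω, Y ω, Z ω)) - entropy p Z

/-- `A → D → B` Markov chain: `A` and `B` are conditionally independent given `D`. -/
def CondIndep {Ω α β δ : Type*} [Fintype Ω]
    (p : Ω → ℝ) (A : Ω → α) (B : Ω → β) (D : Ω → δ) : Prop :=
  ∀ (a : α) (b : β) (d : δ),
    pr p (fun ω => A ω = a ∧ B ω = b ∧ D ω = d) * pr p (fun ω => D ω = d)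
      = pr p (fun ω => A ω = a ∧ D ω = d) * pr p (fun ω => B ω = b ∧ D ω = d)

/-! By the chain rule, `I(M; Z₁,…,Z_K | C) = ∑ₖ I(M; Zₖ | Z₁,…,Zₖ₋₁, C)`, so it is enough to compare
the sums term by term. Put `U = (Z₁,…,Zₖ₋₁, C)`. Since `Cₖ` is a function of `U`, expanding
`I(Zₖ; (U, M) | Cₖ)` in both orders gives
`I(Zₖ; U | Cₖ) + I(Zₖ; M | U) = I(Zₖ; M | Cₖ) + I(Zₖ; U | Cₖ, M)`.
The first term is nonnegative by Gibbs' inequality and the last one vanishes by the Markov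
hypothesis. -/

theorem sub_le_mul_log_sub_log {a b : ℝ} (ha : 0 ≤ a) (hb : 0 ≤ b) (hab : a ≠ 0 → b ≠ 0) :
    a - b ≤ a * (Real.log a - Real.log b) := by
  rcases ha.eq_or_lt with rfl | ha
  · simpa only [zero_sub, zero_mul, neg_nonpos] using hb
  · have hb : 0 < b := hb.lt_of_ne' (hab ha.ne')
    calc a - b = a * (1 - (a / b)⁻¹) := by field_simp
      _ ≤ a * Real.log (a / b) := by
        gcongr
        exact Real.one_sub_inv_le_log_of_pos (div_pos ha hb)
      _ = a * (Real.log a - Real.log b) := by rw [Real.log_div ha.ne' hb.ne']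

section Probability

variable {Ω α β δ : Type*} [Fintype Ω] {p : Ω → ℝ}

theorem pr_nonneg (hp : ∀ ω, 0 ≤ p ω) (E : Ω → Prop) : 0 ≤ pr p E :=
  Finset.sum_nonneg fun ω _ => ite_nonneg (hp ω) le_rfl

theorem pr_mono (hp : ∀ ω, 0 ≤ p ω) {E F : Ω → Prop} (h : ∀ ω, E ω → F ω) : pr p E ≤ pr p F := by
  refine Finset.sum_le_sum fun ω _ => ?_
  by_cases hE : E ω
  · simp only [if_pos hE, if_pos (h ω hE), le_refl]
  · simpa only [if_neg hE] using ite_nonneg (hp ω) le_rfl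

theorem pr_ne_zero_of_imp (hp : ∀ ω, 0 ≤ p ω) {E F : Ω → Prop} (h : ∀ ω, E ω → F ω)
    (hE : pr p E ≠ 0) : pr p F ≠ 0 :=
  (((pr_nonneg hp E).lt_of_ne' hE).trans_le (pr_mono hp h)).ne'

theorem pr_marginals_ne_zero (hp : ∀ ω, 0 ≤ p ω) {A : Ω → α} {B : Ω → β} {D : Ω → δ}
    {a : α} {b : β} {d : δ} (h : pr p (fun ω => A ω = a ∧ B ω = b ∧ D ω = d) ≠ 0) :
    pr p (fun ω => A ω = a ∧ D ω = d) ≠ 0 ∧ pr p (fun ω => B ω = b ∧ D ω = d) ≠ 0 ∧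
      pr p (fun ω => D ω = d) ≠ 0 :=
  ⟨pr_ne_zero_of_imp hp (fun _ hω => ⟨hω.1, hω.2.2⟩) h,
    pr_ne_zero_of_imp hp (fun _ hω => hω.2) h, pr_ne_zero_of_imp hp (fun _ hω => hω.2.2) h⟩

theorem sum_pr_eq_and [Fintype α] (X : Ω → α) (E : Ω → Prop) :
    ∑ x, pr p (fun ω => X ω = x ∧ E ω) = pr p E := by
  unfold pr
  rw [Finset.sum_comm]
  refine Finset.sum_congr rfl fun ω _ => ?_
  by_cases h : E ω <;> simp [h]

/-- The law under which `(A, D)` and `(B, D)` keep their distributions but `A` and `B` are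
conditionally independent given `D`. Conditional mutual information is the relative entropy of the
joint law from it. Where `D = d` has probability zero, `x / 0 = 0` gives the intended value `0`. -/
noncomputable def condProdLaw {Ω α β δ : Type*} [Fintype Ω] (p : Ω → ℝ)
    (A : Ω → α) (B : Ω → β) (D : Ω → δ) (a : α) (b : β) (d : δ) : ℝ :=
  pr p (fun ω => A ω = a ∧ D ω = d) * pr p (fun ω => B ω = b ∧ D ω = d) / pr p fun ω => D ω = d

theorem condProdLaw_nonneg (hp : ∀ ω, 0 ≤ p ω) (A : Ω → α) (B : Ω → β) (D : Ω → δ)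
    (a : α) (b : β) (d : δ) : 0 ≤ condProdLaw p A B D a b d :=
  div_nonneg (mul_nonneg (pr_nonneg hp _) (pr_nonneg hp _)) (pr_nonneg hp _)

theorem sum_condProdLaw [Fintype α] [Fintype β] (A : Ω → α) (B : Ω → β) (D : Ω → δ) (d : δ) :
    ∑ b, ∑ a, condProdLaw p A B D a b d = pr p fun ω => D ω = d := by
  simp only [condProdLaw, ← Finset.sum_div, ← Finset.mul_sum, ← Finset.sum_mul, sum_pr_eq_and,
    mul_self_div_self]

theorem condProdLaw_ne_zero (hp : ∀ ω, 0 ≤ p ω) {A : Ω → α} {B : Ω → β} {D : Ω → δ}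
    {a : α} {b : β} {d : δ} (h : pr p (fun ω => A ω = a ∧ B ω = b ∧ D ω = d) ≠ 0) :
    condProdLaw p A B D a b d ≠ 0 := by
  obtain ⟨hAD, hBD, hD⟩ := pr_marginals_ne_zero hp h
  exact div_ne_zero (mul_ne_zero hAD hBD) hD

theorem pr_mul_log_condProdLaw (hp : ∀ ω, 0 ≤ p ω) (A : Ω → α) (B : Ω → β) (D : Ω → δ)
    (a : α) (b : β) (d : δ) :
    pr p (fun ω => A ω = a ∧ B ω = b ∧ D ω = d) * Real.log (condProdLaw p A B D a b d) =
      pr p (fun ω => A ω = a ∧ B ω = b ∧ D ω = d) * Real.log (pr p fun ω => A ω = a ∧ D ω = d) +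
      pr p (fun ω => A ω = a ∧ B ω = b ∧ D ω = d) * Real.log (pr p fun ω => B ω = b ∧ D ω = d) -
      pr p (fun ω => A ω = a ∧ B ω = b ∧ D ω = d) * Real.log (pr p fun ω => D ω = d) := by
  by_cases h : pr p (fun ω => A ω = a ∧ B ω = b ∧ D ω = d) = 0
  · simp only [h, zero_mul, add_zero, sub_zero]
  · obtain ⟨hAD, hBD, hD⟩ := pr_marginals_ne_zero hp h
    rw [condProdLaw, Real.log_div (mul_ne_zero hAD hBD) hD, Real.log_mul hAD hBD, mul_sub, mul_add]

theorem CondIndep.pr_eq_condProdLaw (hp : ∀ ω, 0 ≤ p ω) {A : Ω → α} {B : Ω → β} {D : Ω → δ}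
    (h : CondIndep p A B D) (a : α) (b : β) (d : δ) :
    pr p (fun ω => A ω = a ∧ B ω = b ∧ D ω = d) = condProdLaw p A B D a b d := by
  by_cases hD : pr p (fun ω => D ω = d) = 0
  · rw [condProdLaw, hD, div_zero]
    by_contra hABD
    exact (pr_marginals_ne_zero hp hABD).2.2 hD
  · exact eq_div_of_mul_eq hD (h a b d)

end Probability

section CondMutualInfo

variable {Ω α β β' δ δ' : Type*} [Fintype Ω] [Fintype α] [Fintype β] [Fintype β'] [Fintype δ]
  [Fintype δ'] {p : Ω → ℝ}

theorem sum_pr_mul (X : Ω → α) (g : α → ℝ) :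
    ∑ x, pr p (fun ω => X ω = x) * g x = ∑ ω, p ω * g (X ω) := by
  simp only [pr, Finset.sum_mul, ite_mul, zero_mul]
  rw [Finset.sum_comm]
  simp only [Finset.sum_ite_eq, Finset.mem_univ, if_true]

theorem entropy_eq_sum (X : Ω → α) :
    entropy p X = -∑ ω, p ω * Real.log (pr p fun ω' => X ω' = X ω) :=
  congrArg Neg.neg (sum_pr_mul X fun x => Real.log (pr p fun ω => X ω = x))

theorem entropy_congr {X : Ω → α} {Y : Ω → β} (h : ∀ ω ω', X ω = X ω' ↔ Y ω = Y ω') :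
    entropy p X = entropy p Y := by
  simp only [entropy_eq_sum, h]

theorem entropy_comp_eq_sum (X : Ω → α) (f : α → β) :
    entropy p (fun ω => f (X ω)) =
      -∑ x, pr p (fun ω => X ω = x) * Real.log (pr p fun ω => f (X ω) = f x) := by
  rw [entropy_eq_sum, sum_pr_mul X fun x => Real.log (pr p fun ω => f (X ω) = f x)]

theorem condMutualInfo_comm (A : Ω → α) (B : Ω → β) (D : Ω → δ) :
    condMutualInfo p A B D = condMutualInfo p B A D := by
  have hABD : entropy p (fun ω => (A ω, B ω, D ω)) = entropy p fun ω => (B ω, A ω, D ω) :=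
    entropy_congr fun ω ω' => by simp only [Prod.mk.injEq, and_left_comm]
  unfold condMutualInfo
  rw [hABD]
  ring

theorem condMutualInfo_congr {A : Ω → α} {B : Ω → β} {B' : Ω → β'} {D : Ω → δ} {D' : Ω → δ'}
    (hB : ∀ ω ω', B ω = B ω' ↔ B' ω = B' ω') (hD : ∀ ω ω', D ω = D ω' ↔ D' ω = D' ω') :
    condMutualInfo p A B D = condMutualInfo p A B' D' := by
  have hAD : entropy p (fun ω => (A ω, D ω)) = entropy p fun ω => (A ω, D' ω) :=
    entropy_congr fun ω ω' => by simp only [Prod.mk.injEq, hD]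
  have hBD : entropy p (fun ω => (B ω, D ω)) = entropy p fun ω => (B' ω, D' ω) :=
    entropy_congr fun ω ω' => by simp only [Prod.mk.injEq, hB, hD]
  have hABD : entropy p (fun ω => (A ω, B ω, D ω)) = entropy p fun ω => (A ω, B' ω, D' ω) :=
    entropy_congr fun ω ω' => by simp only [Prod.mk.injEq, hB, hD]
  unfold condMutualInfo
  rw [hAD, hBD, hABD, entropy_congr hD]

theorem condMutualInfo_of_subsingleton [Subsingleton β] (A : Ω → α) (B : Ω → β) (D : Ω → δ) :
    condMutualInfo p A B D = 0 := by
  have hBD : entropy p (fun ω => (B ω, D ω)) = entropy p D :=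
    entropy_congr fun ω ω' => by simp [Subsingleton.elim (B ω) (B ω')]
  have hABD : entropy p (fun ω => (A ω, B ω, D ω)) = entropy p fun ω => (A ω, D ω) :=
    entropy_congr fun ω ω' => by simp [Subsingleton.elim (B ω) (B ω')]
  unfold condMutualInfo
  rw [hBD, hABD]
  ring

theorem condMutualInfo_prod_right (A : Ω → α) (B : Ω → β) (B' : Ω → β') (D : Ω → δ) :
    condMutualInfo p A (fun ω => (B ω, B' ω)) D =
      condMutualInfo p A B D + condMutualInfo p A B' fun ω => (B ω, D ω) := by
  have hBB'D : entropy p (fun ω => ((B ω, B' ω), D ω)) = entropy p fun ω => (B' ω, B ω, D ω) :=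
    entropy_congr fun ω ω' => by simp only [Prod.mk.injEq, and_assoc, and_left_comm]
  have hABB'D : entropy p (fun ω => (A ω, (B ω, B' ω), D ω)) =
      entropy p fun ω => (A ω, B' ω, B ω, D ω) :=
    entropy_congr fun ω ω' => by simp only [Prod.mk.injEq, and_assoc, and_left_comm]
  unfold condMutualInfo
  rw [hBB'D, hABB'D]
  ring

theorem condMutualInfo_pi_eq_sum {K : ℕ} {ζ : Fin K → Type*} [∀ k, Fintype (ζ k)]
    (A : Ω → α) (Z : ∀ k, Ω → ζ k) (D : Ω → δ) :
    condMutualInfo p A (fun ω k => Z k ω) D =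
      ∑ k : Fin K, condMutualInfo p A (Z k)
        fun ω => ((fun i : Fin (k : ℕ) => Z ⟨i, i.isLt.trans k.isLt⟩ ω), D ω) := by
  induction K with
  | zero => rw [condMutualInfo_of_subsingleton, Fin.sum_univ_zero]
  | succ K ih =>
    have hsplit : ∀ ω ω', ((fun k => Z k ω) = fun k => Z k ω') ↔
        ((fun k : Fin K => Z k.castSucc ω), Z (Fin.last K) ω) =
          ((fun k : Fin K => Z k.castSucc ω'), Z (Fin.last K) ω') := fun ω ω' => by
      simp only [Prod.mk.injEq, funext_iff, Fin.forall_fin_succ']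
    rw [condMutualInfo_congr hsplit fun _ _ => Iff.rfl, condMutualInfo_prod_right,
      ih fun k => Z k.castSucc, Fin.sum_univ_castSucc]
    rfl

theorem condMutualInfo_eq_sum_mul_log_sub_log (hp : ∀ ω, 0 ≤ p ω)
    (A : Ω → α) (B : Ω → β) (D : Ω → δ) :
    condMutualInfo p A B D = ∑ a, ∑ b, ∑ d, pr p (fun ω => A ω = a ∧ B ω = b ∧ D ω = d) *
      (Real.log (pr p fun ω => A ω = a ∧ B ω = b ∧ D ω = d) -
        Real.log (condProdLaw p A B D a b d)) := by
  let X : Ω → α × β × δ := fun ω => (A ω, B ω, D ω)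
  have hAD := entropy_comp_eq_sum (p := p) X fun x => (x.1, x.2.2)
  have hBD := entropy_comp_eq_sum (p := p) X fun x => x.2
  have hABD := entropy_comp_eq_sum (p := p) X id
  have hD := entropy_comp_eq_sum (p := p) X fun x => x.2.2
  simp only [X, id, Prod.mk.injEq, Fintype.sum_prod_type] at hAD hBD hABD hD
  simp only [condMutualInfo, hAD, hBD, hABD, hD, mul_sub, pr_mul_log_condProdLaw hp,
    Finset.sum_add_distrib, Finset.sum_sub_distrib]
  ring

theorem condMutualInfo_nonneg (hp : ∀ ω, 0 ≤ p ω) (A : Ω → α) (B : Ω → β) (D : Ω → δ) :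
    0 ≤ condMutualInfo p A B D := by
  let joint a b d := pr p fun ω => A ω = a ∧ B ω = b ∧ D ω = d
  let prod := condProdLaw p A B D
  have hjoint : ∀ d, ∑ b, ∑ a, joint a b d = pr p fun ω => D ω = d := fun d => by
    simp only [joint, sum_pr_eq_and]
  calc 0 = ∑ d, ∑ b, ∑ a, (joint a b d - prod a b d) := by
        simp only [Finset.sum_sub_distrib, hjoint, prod, sum_condProdLaw, sub_self,
          Finset.sum_const_zero]
    _ ≤ ∑ d, ∑ b, ∑ a, joint a b d * (Real.log (joint a b d) - Real.log (prod a b d)) := by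
        gcongr with d _ b _ a
        exact sub_le_mul_log_sub_log (pr_nonneg hp _) (condProdLaw_nonneg hp A B D a b d)
          (condProdLaw_ne_zero hp)
    _ = ∑ a, ∑ b, ∑ d, joint a b d * (Real.log (joint a b d) - Real.log (prod a b d)) := by
        rw [Finset.sum_comm, Finset.sum_congr rfl fun b _ => Finset.sum_comm, Finset.sum_comm]
    _ = condMutualInfo p A B D := (condMutualInfo_eq_sum_mul_log_sub_log hp A B D).symm

theorem CondIndep.condMutualInfo_eq_zero (hp : ∀ ω, 0 ≤ p ω) {A : Ω → α} {B : Ω → β} {D : Ω → δ}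
    (h : CondIndep p A B D) : condMutualInfo p A B D = 0 := by
  simp only [condMutualInfo_eq_sum_mul_log_sub_log hp, h.pr_eq_condProdLaw hp, sub_self, mul_zero,
    Finset.sum_const_zero]

theorem CondIndep.condMutualInfo_le (hp : ∀ ω, 0 ≤ p ω) {A : Ω → α} {B : Ω → β} {U : Ω → δ}
    {V : Ω → δ'} (h : CondIndep p U B fun ω => (V ω, A ω)) (hV : V.FactorsThrough U) :
    condMutualInfo p A B U ≤ condMutualInfo p A B V := by
  have hmarkov : condMutualInfo p B U (fun ω => (A ω, V ω)) = 0 := by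
    rw [condMutualInfo_comm, ← h.condMutualInfo_eq_zero hp]
    exact condMutualInfo_congr (fun _ _ => Iff.rfl)
      fun ω ω' => by simp only [Prod.mk.injEq, and_comm]
  calc condMutualInfo p A B U = condMutualInfo p B A fun ω => (U ω, V ω) := by
        rw [condMutualInfo_comm]
        refine condMutualInfo_congr (fun _ _ => Iff.rfl) fun ω ω' => ?_
        rw [Prod.mk.injEq, and_iff_left_of_imp fun hU => hV hU]
    _ ≤ condMutualInfo p B U V + condMutualInfo p B A fun ω => (U ω, V ω) :=
        le_add_of_nonneg_left (condMutualInfo_nonneg hp B U V)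
    _ = condMutualInfo p B (fun ω => (U ω, A ω)) V := (condMutualInfo_prod_right B U A V).symm
    _ = condMutualInfo p B (fun ω => (A ω, U ω)) V :=
        condMutualInfo_congr (fun ω ω' => by simp only [Prod.mk.injEq, and_comm])
          fun _ _ => Iff.rfl
    _ = condMutualInfo p B A V := by rw [condMutualInfo_prod_right, hmarkov, add_zero]
    _ = condMutualInfo p A B V := condMutualInfo_comm B A V

end CondMutualInfo

/-- Here `T` is the full code, and `C k` is the code of frame `k`. -/
theorem leakage_subadditive_general {Ω 𝕄 Γ : Type*} {K : ℕ} {γ ζ : Fin K → Type*}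
    [Fintype Ω] [Fintype 𝕄] [Fintype Γ] [∀ k, Fintype (γ k)] [∀ k, Fintype (ζ k)]
    (p : Ω → ℝ) (hp : ∀ ω, 0 ≤ p ω)
    (M : Ω → 𝕄) (T : Ω → Γ) (C : ∀ k, Ω → γ k) (Z : ∀ k, Ω → ζ k)
    (hC : ∀ k, (C k).FactorsThrough T)
    (hMarkov : ∀ k : Fin K,
      CondIndep p
        (fun ω => ((fun i : Fin (k : ℕ) => Z ⟨i, i.isLt.trans k.isLt⟩ ω), T ω))
        (Z k)
        (fun ω => (C k ω, M ω))) :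
    condMutualInfo p M (fun ω k => Z k ω) T ≤ ∑ k, condMutualInfo p M (Z k) (C k) := by
  rw [condMutualInfo_pi_eq_sum]
  exact Finset.sum_le_sum fun k _ =>
    (hMarkov k).condMutualInfo_le hp fun _ _ h => hC k (congrArg Prod.snd h)

/-- Lemma 2 of the paper: if for each frame `k` the triple
`(Z₁,…,Z_{k-1}, C) → (C_k, M) → Z_k` is a Markov chain, then the total leakage
`I(M; Z₁,…,Z_K | C)` is at most the sum of the per-frame leakages `I(M; Z_k | C_k)`. -/
theorem leakage_subadditive
    {Ω 𝕄 γ ζ : Type*} [Fintype Ω] [Fintype 𝕄] [Fintype γ] [Fintype ζ]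
    (p : Ω → ℝ) (hp : ∀ ω, 0 ≤ p ω) (hp1 : ∑ ω, p ω = 1)
    (K : ℕ) (hK : 1 ≤ K)
    (M : Ω → 𝕄) (C : Fin K → Ω → γ) (Z : Fin K → Ω → ζ)
    (hMarkov : ∀ k : Fin K,
      CondIndep p
        (fun ω => ((fun i : Fin (k : ℕ) => Z ⟨i, lt_trans i.isLt k.isLt⟩ ω),
                   (fun i : Fin K => C i ω)))
        (Z k)
        (fun ω => (C k ω, M ω))) :
    condMutualInfo p M (fun ω => fun i : Fin K => Z i ω) (fun ω => fun i : Fin K => C i ω)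
      ≤ ∑ k : Fin K, condMutualInfo p M (Z k) (C k) := by
  exact leakage_subadditive_general p hp M (fun ω i => C i ω) C Z
    (fun k _ _ h => congrFun h k) hMarkov
end

section
/- Let K ≥ 2, let R_s > 0 and R_{d,1}, …, R_{d,K} ≥ 0. Define the S-HARQ decoding region A = { x ∈ ℝ^K : x_k ≥ 0 for all k, and Σ_{k=1}^K max(x_k − R_{d,k}, 0) ≥ R_s } and the IR-HARQ decoding region B = { x ∈ ℝ^K : x_k ≥ 0 for all k, and Σ_{k=1}^K x_k ≥ R_s + Σ_{k=1}^K R_{d,k} }. Then B ⊆ A; moreover, if R_{d,j} > 0 for some j, the inclusion is strict, i.e., there exists x ∈ A with x ∉ B. -/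
/-!
Since `t ≤ t⁺`, the truncated sum dominates `∑ k, x k - ∑ k, Rd k`, which gives the inclusion.
It is strict because S-HARQ never charges a frame for more randomization than it received: if all
the mutual information `Rs + Rd i` arrives in a single frame `i`, then S-HARQ decodes, whereas
IR-HARQ still has to pay for the randomization of the other frames.
-/

theorem exists_lt_sum_of_exists_pos {ι M : Type*} [Fintype ι] [Nontrivial ι] [AddCommMonoid M]
    [PartialOrder M] [IsOrderedCancelAddMonoid M] {f : ι → M} (hf : ∀ k, 0 ≤ f k)
    (hpos : ∃ j, 0 < f j) : ∃ i, f i < ∑ k, f k := by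
  obtain ⟨j, hj⟩ := hpos
  obtain ⟨i, hij⟩ := exists_ne j
  exact ⟨i, Finset.single_lt_sum hij.symm (Finset.mem_univ i) (Finset.mem_univ j) hj
    fun k _ _ => hf k⟩

section DecodingRegions

variable {ι M : Type*} [Fintype ι] [AddCommGroup M] [Lattice M]

/-- The S-HARQ decoding region, in terms of the mutual informations `x k` accumulated in the frames:
the secret rate is `Rs`, and frame `k` carries its own random message of rate `Rd k`. -/
def sharqDecodingRegion (Rs : M) (Rd : ι → M) : Set (ι → M) :=
  {x | (∀ k, 0 ≤ x k) ∧ Rs ≤ ∑ k, (x k - Rd k)⁺}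

/-- The IR-HARQ decoding region, for a single codeword over all frames whose randomization rate is
taken to be the total `∑ k, Rd k` of the S-HARQ rates. -/
def irharqDecodingRegion (Rs : M) (Rd : ι → M) : Set (ι → M) :=
  {x | (∀ k, 0 ≤ x k) ∧ Rs + ∑ k, Rd k ≤ ∑ k, x k}

variable [IsOrderedAddMonoid M]

theorem sum_sub_sum_le_sum_posPart_sub (x y : ι → M) :
    ∑ k, x k - ∑ k, y k ≤ ∑ k, (x k - y k)⁺ := by
  rw [← Finset.sum_sub_distrib]
  exact Finset.sum_le_sum fun k _ => le_posPart (x k - y k)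

theorem irharqDecodingRegion_subset_sharqDecodingRegion (Rs : M) (Rd : ι → M) :
    irharqDecodingRegion Rs Rd ⊆ sharqDecodingRegion Rs Rd := fun x ⟨hx, hsum⟩ =>
  ⟨hx, (le_sub_iff_add_le.mpr hsum).trans (sum_sub_sum_le_sum_posPart_sub x Rd)⟩

theorem single_mem_sharqDecodingRegion [DecidableEq ι] {Rs : M} {Rd : ι → M} {i : ι}
    (hi : 0 ≤ Rs + Rd i) : Pi.single i (Rs + Rd i) ∈ sharqDecodingRegion Rs Rd := by
  set x : ι → M := Pi.single i (Rs + Rd i) with hx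
  refine ⟨Pi.single_nonneg.mpr hi, ?_⟩
  calc Rs = x i - Rd i := by rw [hx, Pi.single_eq_same, add_sub_cancel_right]
    _ ≤ (x i - Rd i)⁺ := le_posPart _
    _ ≤ ∑ k, (x k - Rd k)⁺ :=
      Finset.single_le_sum (f := fun k => (x k - Rd k)⁺) (fun k _ => posPart_nonneg _)
        (Finset.mem_univ i)

theorem single_notMem_irharqDecodingRegion [DecidableEq ι] (Rs : M) {Rd : ι → M} {i : ι}
    (hi : Rd i < ∑ k, Rd k) : Pi.single i (Rs + Rd i) ∉ irharqDecodingRegion Rs Rd := by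
  rintro ⟨-, hsum⟩
  rw [Fintype.sum_pi_single'] at hsum
  exact hi.not_ge (le_of_add_le_add_left hsum)

theorem sharq_decoding_region_strictly_larger_general (Rs : M) (Rd : ι → M) :
    irharqDecodingRegion Rs Rd ⊆ sharqDecodingRegion Rs Rd ∧
      ((∃ i, 0 ≤ Rs + Rd i ∧ Rd i < ∑ k, Rd k) →
        irharqDecodingRegion Rs Rd ⊂ sharqDecodingRegion Rs Rd) := by
  classical
  have hsub := irharqDecodingRegion_subset_sharqDecodingRegion Rs Rd
  refine ⟨hsub, fun ⟨i, hnonneg, hlt⟩ => Set.ssubset_iff_exists.mpr ⟨hsub, ?_⟩⟩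
  exact ⟨Pi.single i (Rs + Rd i), single_mem_sharqDecodingRegion hnonneg,
    single_notMem_irharqDecodingRegion Rs hlt⟩

end DecodingRegions

/-- the IR-HARQ decoding region `B` is contained in the S-HARQ decoding
region `A`, and the inclusion is strict as soon as some randomization rate `R_{d,j}` is
positive. -/
theorem sharq_decoding_region_strictly_larger
    (K : ℕ) (hK : 2 ≤ K) (Rs : ℝ) (hRs : 0 < Rs)
    (Rd : Fin K → ℝ) (hRd : ∀ k, 0 ≤ Rd k) :
    ({x : Fin K → ℝ | (∀ k, 0 ≤ x k) ∧ Rs + ∑ k, Rd k ≤ ∑ k, x k}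
      ⊆ {x : Fin K → ℝ | (∀ k, 0 ≤ x k) ∧ Rs ≤ ∑ k, max (x k - Rd k) 0})
    ∧ ((∃ j, 0 < Rd j) →
        ∃ x : Fin K → ℝ,
          x ∈ {x : Fin K → ℝ | (∀ k, 0 ≤ x k) ∧ Rs ≤ ∑ k, max (x k - Rd k) 0} ∧
          x ∉ {x : Fin K → ℝ | (∀ k, 0 ≤ x k) ∧ Rs + ∑ k, Rd k ≤ ∑ k, x k}) := by
  have : Nontrivial (Fin K) := Fin.nontrivial_iff_two_le.mpr hK
  refine (sharq_decoding_region_strictly_larger_general Rs Rd).imp_right fun hstrict hpos => ?_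
  obtain ⟨i, hi⟩ := exists_lt_sum_of_exists_pos hRd hpos
  exact Set.exists_of_ssubset (hstrict ⟨i, add_nonneg hRs.le (hRd i), hi⟩)
end
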